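/- Let (G,*) be a left quasigroup satisfying conditions (5.6) and (5.7), (L,·) a left quasigroup, and π : L → G a bijection. Let M be the ternary system (G, μ^G_3) with μ^G_3(a,b,c) = b*(a\c). Then the dynamical Yang–Baxter map R^{(L,M,π)}(λ) satisfies the unitary condition R^{(L,M,π)}(λ) ∘ P ∘ R^{(L,M,π)}(λ) = P for all λ ∈ L (where P(u,v) = (v,u)) if and only if (a*b)*b = a for all a,b ∈ G. -/

import Mathlib

/-- Condition (5.6) on a left quasigroup:
(b*c)*(a\((a*c)*((b*c)\(b*d)))) = b*(a\((a*c)*d)). -/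
def Cond56 {G : Type*} (gm gld : G → G → G) : Prop :=
  ∀ a b c d : G,
    gm (gm b c) (gld a (gm (gm a c) (gld (gm b c) (gm b d))))
      = gm b (gld a (gm (gm a c) d))

/-- Condition (5.7) on a left quasigroup:
(a*c)*((b*c)\(b*d)) = ((a*c)*d)*((b*(a\((a*c)*d)))\(b*d)). -/
def Cond57 {G : Type*} (gm gld : G → G → G) : Prop :=
  ∀ a b c d : G,
    gm (gm a c) (gld (gm b c) (gm b d))
      = gm (gm (gm a c) d) (gld (gm b (gld a (gm (gm a c) d))) (gm b d))

/-- ξ_λ(u)(v) = λ\π⁻¹(μ(π(λ), π(λ·u), π((λ·u)·v))). -/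
def xiMap {L M : Type*} (mul ld : L → L → L) (μ : M → M → M → M) (π : L ≃ M)
    (lam u v : L) : L :=
  ld lam (π.symm (μ (π lam) (π (mul lam u)) (π (mul (mul lam u) v))))

/-- R^{(L,M,π)}(λ)(u,v) = ((λ·ξ_λ(u)(v))\((λ·u)·v), ξ_λ(u)(v)). -/
def Rmap {L M : Type*} (mul ld : L → L → L) (μ : M → M → M → M) (π : L ≃ M)
    (lam : L) (p : L × L) : L × L :=
  (ld (mul lam (xiMap mul ld μ π lam p.1 p.2)) (mul (mul lam p.1) p.2),
    xiMap mul ld μ π lam p.1 p.2)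

/-!
Fix `λ` and describe a pair `(u, v)` by `x = π(λ·u)` and `y = π((λ·u)·v)`. In these coordinates
`P ∘ R(λ)` fixes `y` and sends `x` to `μ(π(λ), x, y)`. Since `R(λ) ∘ P ∘ R(λ) = P`
says that `P ∘ R(λ)` is an involution, it amounts to `μ(a, μ(a, x, y), y) = x` for `a = π(λ)`. When
`μ(a, x, y) = x*(a\y)` this reads `(x*(a\y))*(a\y) = x`, and `a\y` takes every value in `G`.
-/

/-- A left quasigroup with multiplication `mul`, whose left division is given as an operation `ld`,
as in `Rmap`, rather than by unique solvability of `mul u v = w`. -/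
structure IsLeftQuasigroup {Q : Type*} (mul ld : Q → Q → Q) : Prop where
  mul_ld : ∀ u w, mul u (ld u w) = w
  ld_mul : ∀ u v, ld u (mul u v) = v

theorem involutive_iff_of_semiconj {α β : Type*} {f : α → α} {g : β → β} (e : α ≃ β)
    (h : Function.Semiconj e f g) : Function.Involutive f ↔ Function.Involutive g := by
  have h_iterate (x : α) : g (g (e x)) = e (f (f x)) := by rw [← h, ← h]
  refine ⟨fun hf => e.surjective.forall.2 fun x => ?_, fun hg x => e.injective ?_⟩
  · rw [h_iterate, hf]
  · rw [← h_iterate, hg]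

theorem comp_swap_comp_self_eq_swap_iff {α β : Type*} (R : α × β → β × α) :
    R ∘ Prod.swap ∘ R = Prod.swap ↔ Function.Involutive (Prod.swap ∘ R) := by
  simp only [funext_iff, Function.Involutive, Function.comp_apply, Prod.swap_eq_iff_eq_swap]

section PathCoordinates

variable {L M : Type*} {mul ld : L → L → L}

/-- The coordinates `(π(λ·u), π((λ·u)·v))` of a pair `(u, v)`: the images under `π` of the two
vertices after `λ` on the path `λ, λ·u, (λ·u)·v`. In them `P ∘ R(λ)` moves only the first one. -/
def pathEquiv (hL : IsLeftQuasigroup mul ld) (π : L ≃ M) (lam : L) : L × L ≃ M × M where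
  toFun p := (π (mul lam p.1), π (mul (mul lam p.1) p.2))
  invFun q := (ld lam (π.symm q.1), ld (π.symm q.1) (π.symm q.2))
  left_inv p := by simp only [Equiv.symm_apply_apply, hL.ld_mul]
  right_inv q := by simp only [Equiv.apply_symm_apply, hL.mul_ld]

theorem semiconj_pathEquiv_swap_comp_Rmap (hL : IsLeftQuasigroup mul ld) (μ : M → M → M → M)
    (π : L ≃ M) (lam : L) :
    Function.Semiconj (pathEquiv hL π lam) (Prod.swap ∘ Rmap mul ld μ π lam)
      (fun q => (μ (π lam) q.1 q.2, q.2)) := fun p => by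
  simp only [pathEquiv, Rmap, xiMap, Equiv.coe_fn_mk, Function.comp_apply, Prod.swap_prod_mk,
    hL.mul_ld, Equiv.apply_symm_apply]

theorem Rmap_comp_swap_comp_Rmap_eq_swap_iff (hL : IsLeftQuasigroup mul ld) (μ : M → M → M → M)
    (π : L ≃ M) (lam : L) :
    Rmap mul ld μ π lam ∘ Prod.swap ∘ Rmap mul ld μ π lam = Prod.swap ↔
      ∀ x y : M, μ (π lam) (μ (π lam) x y) y = x := by
  rw [comp_swap_comp_self_eq_swap_iff,
    involutive_iff_of_semiconj _ (semiconj_pathEquiv_swap_comp_Rmap hL μ π lam)]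
  simp only [Function.Involutive, Prod.forall, Prod.mk.injEq, and_true]

end PathCoordinates

theorem unitary_iff_muG3_general {G L : Type*} {gm gld : G → G → G}
    (hG : IsLeftQuasigroup gm gld) {mul ld : L → L → L} (hL : IsLeftQuasigroup mul ld)
    (π : L ≃ G) :
    (∀ lam : L,
        Rmap mul ld (fun a b c => gm b (gld a c)) π lam ∘ Prod.swap ∘
            Rmap mul ld (fun a b c => gm b (gld a c)) π lam = Prod.swap) ↔
      (∀ a b : G, gm (gm a b) b = a) := by
  simp only [Rmap_comp_swap_comp_Rmap_eq_swap_iff hL]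
  refine ⟨fun h a b => ?_, fun h lam x y => h x (gld (π lam) y)⟩
  have h_base := h (π.symm a) a (gm a b)
  rwa [π.apply_symm_apply, hG.ld_mul] at h_base

/-- for M = (G, μ^G_3) with μ^G_3(a,b,c) = b*(a\c), the dynamical YB map
R^{(L,M,π)}(λ) satisfies the unitary condition iff (a*b)*b = a for all a,b ∈ G. -/
theorem unitary_iff_muG3 {G L : Type*} [Nonempty G] [Nonempty L]
    (gm gld : G → G → G)
    (hgm : ∀ u w : G, gm u (gld u w) = w)
    (hgld : ∀ u v : G, gld u (gm u v) = v)
    (h56 : Cond56 gm gld) (h57 : Cond57 gm gld)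
    (mul ld : L → L → L)
    (hmul : ∀ u w : L, mul u (ld u w) = w)
    (hld : ∀ u v : L, ld u (mul u v) = v)
    (π : L ≃ G) :
    (∀ lam : L,
        Rmap mul ld (fun a b c => gm b (gld a c)) π lam ∘ Prod.swap ∘
            Rmap mul ld (fun a b c => gm b (gld a c)) π lam = Prod.swap) ↔
      (∀ a b : G, gm (gm a b) b = a) := by
  exact unitary_iff_muG3_general ⟨hgm, hgld⟩ ⟨hmul, hld⟩ π
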